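/- arXiv:0902.1358 — 2 statements merged into one kernel-verified Lean document; each statement's English description precedes it below -/
import Mathlib

section
/- Let U ∈ N(∞) (note N(∞) ⊆ H(0)) and write ψ₀(U) = (U₀, U₁) ∈ F × F. Then, in the free group F, the element (a·σ(U₀)·a·σ(U₁))⁻¹·U lies in N(2); equivalently, U = a σ(U₀) a σ(U₁) V for some V ∈ N(2). -/
/-- The four-letter alphabet `{a, b, c, d}`. -/
inductive L4 : Type
  | a | b | c | d
  deriving DecidableEq

/-- The free group `F = F(a, b, c, d)`. -/
abbrev F4 : Type := FreeGroup L4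

def ga : F4 := FreeGroup.of L4.a
def gb : F4 := FreeGroup.of L4.b
def gc : F4 := FreeGroup.of L4.c
def gd : F4 := FreeGroup.of L4.d

/-- The endomorphism `σ` of `F(a,b,c,d)`:
`σ(a) = aca`, `σ(b) = d`, `σ(c) = b`, `σ(d) = c`. -/
def sigma : F4 →* F4 :=
  FreeGroup.lift fun x => match x with
    | L4.a => ga * gc * ga
    | L4.b => gd
    | L4.c => gb
    | L4.d => gc

/-- A seven-letter alphabet corresponding to the free generators
`b, c, d, aba, aca, ada, a²` of the index-2 subgroup `H(0)` of `F`. -/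
inductive E7 : Type
  | eb | ec | ed | eaba | eaca | eada | eaa
  deriving DecidableEq

/-- The embedding of the free group on the seven generators into `F`, sending
the generators to `b, c, d, aba, aca, ada, a²`; its range is `H(0)`. -/
def iota : FreeGroup E7 →* F4 :=
  FreeGroup.lift fun x => match x with
    | E7.eb => gb
    | E7.ec => gc
    | E7.ed => gd
    | E7.eaba => ga * gb * ga
    | E7.eaca => ga * gc * ga
    | E7.eada => ga * gd * ga
    | E7.eaa => ga ^ 2

/-- The homomorphism `ψ₀ : H(0) → F × F` (written on the free generators of
`H(0)`): `ψ₀(b) = (a,c)`, `ψ₀(c) = (a,d)`, `ψ₀(d) = (1,b)`, `ψ₀(aba) = (c,a)`,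
`ψ₀(aca) = (d,a)`, `ψ₀(ada) = (b,1)`, `ψ₀(a²) = (1,1)`. -/
def psi : FreeGroup E7 →* F4 × F4 :=
  FreeGroup.lift fun x => match x with
    | E7.eb => (ga, gc)
    | E7.ec => (ga, gd)
    | E7.ed => (1, gb)
    | E7.eaba => (gc, ga)
    | E7.eaca => (gd, ga)
    | E7.eada => (gb, 1)
    | E7.eaa => (1, 1)

/-- The relator set `R(i)` of the presentation `Γ(i)`, `1 ≤ i < ∞`:
`R(1) = {a², b², c², d², bcd, (ad)⁴}` and, for `i ≥ 2`,
`R(i) = R(1) ∪ {σʲ((ad)⁴) : 1 ≤ j ≤ i−1} ∪ {σʲ((adacac)⁴) : 0 ≤ j ≤ i−2}`. -/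
def Rpres (i : ℕ) : Set F4 :=
  {ga ^ 2, gb ^ 2, gc ^ 2, gd ^ 2, gb * gc * gd, (ga * gd) ^ 4}
    ∪ {w | ∃ j : ℕ, 1 ≤ j ∧ j + 1 ≤ i ∧ w = (⇑sigma)^[j] ((ga * gd) ^ 4)}
    ∪ {w | ∃ j : ℕ, j + 2 ≤ i ∧ w = (⇑sigma)^[j] ((ga * gd * ga * gc * ga * gc) ^ 4)}

/-- The Lysenok relator set
`R(∞) = {a², b², c², d², bcd} ∪ {σⁱ((ad)⁴) : i ≥ 0} ∪ {σⁱ((adacac)⁴) : i ≥ 0}`. -/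
def Rinf : Set F4 :=
  {ga ^ 2, gb ^ 2, gc ^ 2, gd ^ 2, gb * gc * gd}
    ∪ {w | ∃ i : ℕ, w = (⇑sigma)^[i] ((ga * gd) ^ 4)}
    ∪ {w | ∃ i : ℕ, w = (⇑sigma)^[i] ((ga * gd * ga * gc * ga * gc) ^ 4)}

/-!
Write `π : F → Γ₂ = F / N(2)`, `s = π ∘ σ` and `t = π(a) s π(a)⁻¹`, so that the claim reads
`π(U) = t(U₀) s(U₁)`. Both sides are multiplicative in `U` as soon as the values of `s` and `t`
involved commute. In `Γ₂` the elements `q = aca` and `c` generate a dihedral group of order dividing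
`8`, under which `d` has only the four conjugates `d`, `qdq`, `cqdqc`, `qcqdqcq`; let `Q` be the
subgroup they generate. The relators `(ad)⁴` and `(adacac)⁴` say that `ada` commutes with `d` and
with `cqdqc`, which is enough to make `Q` commute with `aQa`.

Hence the `U ∈ H(0)` with `s(U₀), s(U₁) ∈ Q` and `π(U) = t(U₀) s(U₁)` form a subgroup, and it is
normal in `F`. It contains `a²`, `b²`, `c²`, `d²`, `bcd`, `(ad)⁴` and `(adacac)⁴` because for these
`π(U) = s(U₀) = s(U₁) = 1`. Every other relator is some `σ(w⁴)`, for which `U₁ = w⁴` and `U₀` is a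
fourth power of a word in `a` and `d`. Modulo the preimage of `Q` under `s` the group `F` is
dihedral of order dividing `8`, so `s(w⁴) ∈ Q`; and `s(U₀)` is a fourth power in `⟨q, c⟩`, hence
trivial.
-/

section Groups

variable {G : Type*} [Group G]

theorem mul_mul_cancel_of_mul_self {x : G} (hx : x * x = 1) (z : G) : x * (x * z) = z := by
  rw [← mul_assoc, hx, one_mul]

theorem conj_mul_self {x y : G} (hx : x * x = 1) (hy : y * y = 1) :
    x * y * x * (x * y * x) = 1 := by
  simp [mul_assoc, mul_mul_cancel_of_mul_self hx, mul_mul_cancel_of_mul_self hy, hx]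

theorem commute_of_mul_self {x y : G} (hx : x * x = 1) (hy : y * y = 1)
    (hxy : x * y * (x * y) = 1) : Commute x y :=
  calc
    x * y = (x * y)⁻¹ := (inv_eq_of_mul_eq_one_left hxy).symm
    _ = y * x := by
      rw [mul_inv_rev, inv_eq_of_mul_eq_one_left hx, inv_eq_of_mul_eq_one_left hy]

theorem mem_normalizer_of_mul_self_mem_normalizer {s : Set G} {x : G}
    (hxx : x * x ∈ Subgroup.normalizer s) (hx : ∀ u ∈ s, x * u * x⁻¹ ∈ s) :
    x ∈ Subgroup.normalizer s := by
  refine Subgroup.mem_set_normalizer_iff.2 fun u => ⟨hx u, fun hu => ?_⟩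
  refine (Subgroup.mem_set_normalizer_iff.1 hxx u).2 ?_
  simpa only [mul_assoc, mul_inv_rev] using hx _ hu

theorem normalizer_le_normalizer_centralizer (s : Set G) :
    Subgroup.normalizer s ≤ Subgroup.normalizer (Subgroup.centralizer s : Set G) :=
  Subgroup.le_set_normalizer_iff.2 fun g hg x hx =>
    (Subgroup.normal_subgroupOf_iff (Subgroup.centralizer_le_normalizer s)).1 inferInstance x g
      hx hg

theorem map_mem_of_forall_map_of_mem {α : Type*} (f : FreeGroup α →* G) {H : Subgroup G}
    (hf : ∀ x, f (FreeGroup.of x) ∈ H) (w : FreeGroup α) : f w ∈ H := by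
  have hle : Subgroup.closure (Set.range FreeGroup.of) ≤ H.comap f :=
    (Subgroup.closure_le _).2 (Set.range_subset_iff.2 hf)
  rw [FreeGroup.closure_range_of] at hle
  exact hle (Subgroup.mem_top w)

end Groups

section Dihedral

variable {G : Type*} [Group G] {x y g : G}

theorem mul_mul_eq_inv_of_mem_zpowers (hx : x * x = 1) (hy : y * y = 1)
    (hg : g ∈ Subgroup.zpowers (x * y)) : y * g * y = g⁻¹ := by
  obtain ⟨i, rfl⟩ := hg
  have hxi : x⁻¹ = x := inv_eq_of_mul_eq_one_left hx
  have hyi : y⁻¹ = y := inv_eq_of_mul_eq_one_left hy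
  have hinv : y * (x * y) * y⁻¹ = (x * y)⁻¹ := by
    rw [mul_inv_rev, hxi, hyi, ← mul_assoc, mul_assoc, hy, mul_one]
  calc
    y * (x * y) ^ i * y = (y * (x * y) * y⁻¹) ^ i := by rw [conj_zpow, hyi]
    _ = ((x * y) ^ i)⁻¹ := by rw [hinv, inv_zpow]

theorem mem_zpowers_or_mul_mem_zpowers_of_mem_closure_pair (hx : x * x = 1) (hy : y * y = 1)
    (hg : g ∈ Subgroup.closure {x, y}) :
    g ∈ Subgroup.zpowers (x * y) ∨ g * y ∈ Subgroup.zpowers (x * y) := by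
  have y_mul : ∀ u, (u ∈ Subgroup.zpowers (x * y) ∨ u * y ∈ Subgroup.zpowers (x * y)) →
      y * u ∈ Subgroup.zpowers (x * y) ∨ y * u * y ∈ Subgroup.zpowers (x * y) := by
    rintro u (hu | hu)
    · right
      exact mul_mul_eq_inv_of_mem_zpowers hx hy hu ▸ Subgroup.inv_mem _ hu
    · left
      have hyu : y * u = (u * y)⁻¹ := by
        rw [← mul_mul_eq_inv_of_mem_zpowers hx hy hu, mul_assoc, mul_assoc, hy, mul_one]
      exact hyu ▸ Subgroup.inv_mem _ hu
  have x_mul : ∀ u, (u ∈ Subgroup.zpowers (x * y) ∨ u * y ∈ Subgroup.zpowers (x * y)) →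
      x * u ∈ Subgroup.zpowers (x * y) ∨ x * u * y ∈ Subgroup.zpowers (x * y) := by
    intro u hu
    have hxu : x * u = x * y * (y * u) := by rw [mul_assoc, mul_mul_cancel_of_mul_self hy]
    rw [hxu, mul_assoc (x * y)]
    exact (y_mul u hu).imp (Subgroup.mul_mem _ (Subgroup.mem_zpowers _))
      (Subgroup.mul_mem _ (Subgroup.mem_zpowers _))
  induction hg using Subgroup.closure_induction_left with
  | one => exact .inl (Subgroup.one_mem _)
  | mul_left z hz w _ ih =>
    rcases hz with rfl | rfl
    exacts [x_mul w ih, y_mul w ih]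
  | inv_mul_cancel z hz w _ ih =>
    rcases hz with rfl | rfl
    · rw [inv_eq_of_mul_eq_one_left hx]
      exact x_mul w ih
    · rw [inv_eq_of_mul_eq_one_left hy]
      exact y_mul w ih

theorem pow_eq_one_of_mem_closure_pair {n : ℕ} (hn : Even n) (hx : x * x = 1) (hy : y * y = 1)
    (hxy : (x * y) ^ n = 1) (hg : g ∈ Subgroup.closure {x, y}) : g ^ n = 1 := by
  rcases mem_zpowers_or_mul_mem_zpowers_of_mem_closure_pair hx hy hg with hrot | hrefl
  · obtain ⟨i, rfl⟩ := hrot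
    change ((x * y) ^ i) ^ n = 1
    rw [← zpow_natCast, zpow_comm, zpow_natCast, hxy, one_zpow]
  · have hinv : y * g = y * g⁻¹ := by
      have := mul_mul_eq_inv_of_mem_zpowers hx hy hrefl
      rwa [mul_assoc, mul_assoc, hy, mul_one, mul_inv_rev, inv_eq_of_mul_eq_one_left hy] at this
    have hgg : g ^ 2 = 1 := by rw [pow_two, ← eq_inv_iff_mul_eq_one, ← mul_left_cancel hinv]
    obtain ⟨k, rfl⟩ := hn.two_dvd
    rw [pow_mul, hgg, one_pow]

theorem map_pow_four_eq_one (f : F4 →* G) (ha : f ga * f ga = 1) (hb : f gb = 1)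
    (hcd : f gc = f gd) (hd : f gd * f gd = 1) (had : (f ga * f gd) ^ 4 = 1) (w : F4) :
    f w ^ 4 = 1 := by
  refine pow_eq_one_of_mem_closure_pair (by decide) ha hd had
    (map_mem_of_forall_map_of_mem f (fun x => ?_) w)
  cases x with
  | a => exact Subgroup.subset_closure (.inl rfl)
  | b => exact hb ▸ Subgroup.one_mem _
  | c => exact Subgroup.subset_closure (.inr hcd)
  | d => exact Subgroup.subset_closure (.inr rfl)

end Dihedral

section DihedralConjugates

variable {G : Type*} [Group G] {q c d e : G}

/-- The subgroup generated by the conjugates of `d` under the dihedral group `⟨q, c⟩`, written out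
for the case in which `q` and `c` are involutions with `(qc)⁴ = 1` and `c` commutes with `d`. -/
def dihedralConjugates (q c d : G) : Subgroup G :=
  Subgroup.closure {d, q * d * q, c * q * d * q * c, q * c * q * d * q * c * q}

theorem mem_dihedralConjugates : d ∈ dihedralConjugates q c d :=
  Subgroup.subset_closure (.inl rfl)

theorem left_mem_normalizer_dihedralConjugates (hq : q * q = 1) :
    q ∈ Subgroup.normalizer (dihedralConjugates q c d : Set G) := by
  refine Subgroup.normalizer_le_normalizer_closure _ ?_
  refine mem_normalizer_of_mul_self_mem_normalizer (hq ▸ Subgroup.one_mem _) ?_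
  rw [inv_eq_of_mul_eq_one_left hq]
  rintro _ (rfl | rfl | rfl | rfl) <;>
    simp [mul_assoc, mul_mul_cancel_of_mul_self hq, hq]

theorem right_mem_normalizer_dihedralConjugates (hq : q * q = 1) (hc : c * c = 1)
    (hqc : (q * c) ^ 4 = 1) (hcd : Commute c d) :
    c ∈ Subgroup.normalizer (dihedralConjugates q c d : Set G) := by
  have hcqcq : Commute c (q * c * q) := by
    refine commute_of_mul_self hc (conj_mul_self hq hc) ?_
    calc
      c * (q * c * q) * (c * (q * c * q)) = c * (q * c) ^ 4 * c⁻¹ := by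
        simp [pow_succ, mul_assoc]
      _ = 1 := by rw [hqc, mul_one, mul_inv_cancel]
  have hfix : Commute c (q * c * q * d * q * c * q) := by
    simpa only [mul_assoc] using (hcqcq.mul_right hcd).mul_right hcqcq
  refine Subgroup.normalizer_le_normalizer_closure _ ?_
  refine mem_normalizer_of_mul_self_mem_normalizer (hc ▸ Subgroup.one_mem _) ?_
  rw [inv_eq_of_mul_eq_one_left hc]
  rintro _ (rfl | rfl | rfl | rfl)
  · simp [hcd.eq, mul_assoc, hc]
  · simp [mul_assoc]
  · simp [mul_assoc, mul_mul_cancel_of_mul_self hc, hc]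
  · rw [hfix.eq, mul_assoc _ c c, hc, mul_one]
    simp

theorem map_dihedralConjugates {G' : Type*} [Group G'] (f : G →* G') :
    (dihedralConjugates q c d).map f = dihedralConjugates (f q) (f c) (f d) := by
  simp only [dihedralConjugates, MonoidHom.map_closure, Set.image_insert_eq, Set.image_singleton,
    map_mul]

theorem dihedralConjugates_le {H : Subgroup G} (hq : q * q = 1) (hc : c * c = 1)
    (hqH : q ∈ Subgroup.normalizer (H : Set G)) (hcH : c ∈ Subgroup.normalizer (H : Set G))
    (hd : d ∈ H) : dihedralConjugates q c d ≤ H := by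
  have conj_q : ∀ u ∈ H, q * u * q ∈ H := fun u hu => by
    simpa only [inv_eq_of_mul_eq_one_left hq] using (Subgroup.mem_normalizer_iff.1 hqH u).1 hu
  have conj_c : ∀ u ∈ H, c * u * c ∈ H := fun u hu => by
    simpa only [inv_eq_of_mul_eq_one_left hc] using (Subgroup.mem_normalizer_iff.1 hcH u).1 hu
  have hqd : q * d * q ∈ H := conj_q _ hd
  have hcqd : c * q * d * q * c ∈ H := by simpa only [mul_assoc] using conj_c _ hqd
  have hqcqd : q * c * q * d * q * c * q ∈ H := by simpa only [mul_assoc] using conj_q _ hcqd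
  refine (Subgroup.closure_le _).2 ?_
  rintro _ (rfl | rfl | rfl | rfl)
  exacts [hd, hqd, hcqd, hqcqd]

theorem mem_centralizer_dihedralConjugates (hqe : Commute q e) (hde : Commute d e)
    (hcqe : Commute (c * q * d * q * c) e) :
    e ∈ Subgroup.centralizer (dihedralConjugates q c d : Set G) := by
  have hle : dihedralConjugates q c d ≤ Subgroup.centralizer {e} := by
    refine (Subgroup.closure_le _).2 ?_
    rintro _ (rfl | rfl | rfl | rfl) <;>
      refine Subgroup.mem_centralizer_singleton_iff.2 (Commute.eq ?_)
    · exact hde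
    · exact (hqe.mul_left hde).mul_left hqe
    · exact hcqe
    · simpa only [mul_assoc] using (hqe.mul_left hcqe).mul_left hqe
  exact fun x hx => Subgroup.mem_centralizer_singleton_iff.1 (hle hx)

end DihedralConjugates

section GammaTwo

variable {G : Type*} [Group G] {a b c d : G}

/-- The elements `a`, `b`, `c`, `d` satisfy the relators in `R(2)`; squares are written as products
and `σ((ad)⁴)` as `(acac)⁴`. -/
structure GammaTwoRelations (a b c d : G) : Prop where
  a_mul_self : a * a = 1
  b_mul_self : b * b = 1
  c_mul_self : c * c = 1
  d_mul_self : d * d = 1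
  b_mul_c_mul_d : b * c * d = 1
  a_mul_d_pow_four : (a * d) ^ 4 = 1
  acac_pow_four : (a * c * a * c) ^ 4 = 1
  adacac_pow_four : (a * d * a * c * a * c) ^ 4 = 1

namespace GammaTwoRelations

theorem c_mul_d (h : GammaTwoRelations a b c d) : c * d = b :=
  calc
    c * d = b⁻¹ := (inv_eq_of_mul_eq_one_right (by rw [← mul_assoc, h.b_mul_c_mul_d])).symm
    _ = b := inv_eq_of_mul_eq_one_left h.b_mul_self

theorem commute_c_d (h : GammaTwoRelations a b c d) : Commute c d :=
  commute_of_mul_self h.c_mul_self h.d_mul_self (by rw [h.c_mul_d, h.b_mul_self])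

theorem commute_d_ada (h : GammaTwoRelations a b c d) : Commute d (a * d * a) := by
  refine commute_of_mul_self h.d_mul_self (conj_mul_self h.a_mul_self h.d_mul_self) ?_
  calc
    d * (a * d * a) * (d * (a * d * a)) = a⁻¹ * (a * d) ^ 4 * a := by
      simp [pow_succ, mul_assoc]
    _ = 1 := by simp [h.a_mul_d_pow_four]

theorem commute_aca_ada (h : GammaTwoRelations a b c d) : Commute (a * c * a) (a * d * a) := by
  simpa only [inv_eq_of_mul_eq_one_left h.a_mul_self] using
    (Commute.conj_iff a).2 h.commute_c_d

/-- The conjugate of `d` on the left is the one that the relator `(adacac)⁴` is about: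
`(adacac)² = ada · c(aca)d(aca)c`. -/
theorem commute_conj_d_ada (h : GammaTwoRelations a b c d) :
    Commute (c * (a * c * a) * d * (a * c * a) * c) (a * d * a) := by
  have hsq : a * d * a * (c * (a * c * a) * d * (a * c * a) * c) =
      (a * d * a * c * a * c) ^ 2 := by
    simp only [pow_two, mul_assoc]
  refine (commute_of_mul_self (conj_mul_self h.a_mul_self h.d_mul_self) ?_ ?_).symm
  · simpa only [mul_assoc] using conj_mul_self h.c_mul_self
      (conj_mul_self (conj_mul_self h.a_mul_self h.c_mul_self) h.d_mul_self)
  · rw [hsq, ← pow_add, h.adacac_pow_four]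

theorem aca_mem_normalizer (h : GammaTwoRelations a b c d) :
    a * c * a ∈ Subgroup.normalizer (dihedralConjugates (a * c * a) c d : Set G) :=
  left_mem_normalizer_dihedralConjugates (conj_mul_self h.a_mul_self h.c_mul_self)

theorem c_mem_normalizer (h : GammaTwoRelations a b c d) :
    c ∈ Subgroup.normalizer (dihedralConjugates (a * c * a) c d : Set G) :=
  right_mem_normalizer_dihedralConjugates (conj_mul_self h.a_mul_self h.c_mul_self) h.c_mul_self
    h.acac_pow_four h.commute_c_d

theorem commute_conj_dihedralConjugates (h : GammaTwoRelations a b c d) {x y : G}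
    (hx : x ∈ dihedralConjugates (a * c * a) c d) (hy : y ∈ dihedralConjugates (a * c * a) c d) :
    Commute x (a * y * a⁻¹) := by
  have ha : a⁻¹ = a := inv_eq_of_mul_eq_one_left h.a_mul_self
  have haca : a * (a * c * a) * a = c := by
    simp [mul_assoc, mul_mul_cancel_of_mul_self h.a_mul_self, h.a_mul_self]
  have hmap : (dihedralConjugates (a * c * a) c d).map (MulAut.conj a : G →* G) =
      dihedralConjugates c (a * c * a) (a * d * a) := by
    simp only [map_dihedralConjugates, MonoidHom.coe_coe, MulAut.conj_apply, ha, haca]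
  have hle : dihedralConjugates c (a * c * a) (a * d * a) ≤
      Subgroup.centralizer (dihedralConjugates (a * c * a) c d : Set G) :=
    dihedralConjugates_le h.c_mul_self (conj_mul_self h.a_mul_self h.c_mul_self)
      (normalizer_le_normalizer_centralizer _ h.c_mem_normalizer)
      (normalizer_le_normalizer_centralizer _ h.aca_mem_normalizer)
      (mem_centralizer_dihedralConjugates h.commute_aca_ada h.commute_d_ada h.commute_conj_d_ada)
  exact hle (hmap ▸ Subgroup.mem_map_of_mem _ hy) x hx

end GammaTwoRelations

end GammaTwo

section Quotient

/-- The group `Γ₂ = F / N(2)`. -/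
abbrev GammaTwo : Type := F4 ⧸ Subgroup.normalClosure (Rpres 2)

/-- The quotient map `π : F → Γ₂`. -/
def proj : F4 →* GammaTwo := QuotientGroup.mk' _

/-- The map `s = π ∘ σ`. -/
def projSigma : F4 →* GammaTwo := proj.comp sigma

/-- The map `t(w) = π(a) s(w) π(a)⁻¹`. -/
def projSigmaConj : F4 →* GammaTwo := (MulAut.conj (proj ga) : GammaTwo →* GammaTwo).comp projSigma

theorem projSigmaConj_apply (w : F4) :
    projSigmaConj w = proj ga * projSigma w * (proj ga)⁻¹ := rfl

theorem proj_eq_one_of_mem_Rpres {r : F4} (hr : r ∈ Rpres 2) : proj r = 1 :=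
  (QuotientGroup.eq_one_iff r).2 (Subgroup.subset_normalClosure hr)

theorem sigma_ga : sigma ga = ga * gc * ga := by simp [sigma, ga]
theorem sigma_gb : sigma gb = gd := by simp [sigma, gb]
theorem sigma_gc : sigma gc = gb := by simp [sigma, gc]
theorem sigma_gd : sigma gd = gc := by simp [sigma, gd]

@[simp] theorem projSigma_ga : projSigma ga = proj ga * proj gc * proj ga := by
  simp [projSigma, sigma_ga]
@[simp] theorem projSigma_gb : projSigma gb = proj gd := by simp [projSigma, sigma_gb]
@[simp] theorem projSigma_gc : projSigma gc = proj gb := by simp [projSigma, sigma_gc]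
@[simp] theorem projSigma_gd : projSigma gd = proj gc := by simp [projSigma, sigma_gd]

theorem gammaTwoRelations_proj :
    GammaTwoRelations (proj ga) (proj gb) (proj gc) (proj gd) where
  a_mul_self := by
    have hmem : ga * ga ∈ Rpres 2 := by simp [Rpres, pow_two]
    simpa using proj_eq_one_of_mem_Rpres hmem
  b_mul_self := by
    have hmem : gb * gb ∈ Rpres 2 := by simp [Rpres, pow_two]
    simpa using proj_eq_one_of_mem_Rpres hmem
  c_mul_self := by
    have hmem : gc * gc ∈ Rpres 2 := by simp [Rpres, pow_two]
    simpa using proj_eq_one_of_mem_Rpres hmem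
  d_mul_self := by
    have hmem : gd * gd ∈ Rpres 2 := by simp [Rpres, pow_two]
    simpa using proj_eq_one_of_mem_Rpres hmem
  b_mul_c_mul_d := by
    have hmem : gb * gc * gd ∈ Rpres 2 := by simp [Rpres]
    simpa using proj_eq_one_of_mem_Rpres hmem
  a_mul_d_pow_four := by
    have hmem : (ga * gd) ^ 4 ∈ Rpres 2 := by simp [Rpres]
    simpa using proj_eq_one_of_mem_Rpres hmem
  acac_pow_four := by
    have hmem : sigma ((ga * gd) ^ 4) ∈ Rpres 2 := .inl (.inr ⟨1, le_rfl, le_rfl, rfl⟩)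
    simpa [sigma_ga, sigma_gd] using proj_eq_one_of_mem_Rpres hmem
  adacac_pow_four := by
    have hmem : (ga * gd * ga * gc * ga * gc) ^ 4 ∈ Rpres 2 := .inr ⟨0, le_rfl, rfl⟩
    simpa using proj_eq_one_of_mem_Rpres hmem

@[simp] theorem proj_ga_mul_self : proj ga * proj ga = 1 := gammaTwoRelations_proj.a_mul_self
@[simp] theorem proj_gb_mul_self : proj gb * proj gb = 1 := gammaTwoRelations_proj.b_mul_self
@[simp] theorem proj_gc_mul_self : proj gc * proj gc = 1 := gammaTwoRelations_proj.c_mul_self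
@[simp] theorem proj_gd_mul_self : proj gd * proj gd = 1 := gammaTwoRelations_proj.d_mul_self

@[simp] theorem inv_proj_ga : (proj ga)⁻¹ = proj ga :=
  inv_eq_of_mul_eq_one_left proj_ga_mul_self

@[simp] theorem proj_ga_mul_cancel (x : GammaTwo) : proj ga * (proj ga * x) = x :=
  mul_mul_cancel_of_mul_self proj_ga_mul_self x
@[simp] theorem proj_gc_mul_cancel (x : GammaTwo) : proj gc * (proj gc * x) = x :=
  mul_mul_cancel_of_mul_self proj_gc_mul_self x
@[simp] theorem proj_gd_mul_cancel (x : GammaTwo) : proj gd * (proj gd * x) = x :=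
  mul_mul_cancel_of_mul_self proj_gd_mul_self x

theorem projSigmaConj_ga : projSigmaConj ga = proj gc := by
  simp [projSigmaConj_apply, mul_assoc]

theorem proj_gc_mul_proj_gd : proj gc * proj gd = proj gb := gammaTwoRelations_proj.c_mul_d

/-- The subgroup `Q` of `Γ₂` generated by the conjugates of `d` under `⟨aca, c⟩`. -/
def conjugatesD : Subgroup GammaTwo :=
  dihedralConjugates (proj ga * proj gc * proj ga) (proj gc) (proj gd)

theorem proj_gd_mem_conjugatesD : proj gd ∈ conjugatesD := mem_dihedralConjugates

theorem projSigma_mem_normalizer_conjugatesD (w : F4) :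
    projSigma w ∈ Subgroup.normalizer (conjugatesD : Set GammaTwo) := by
  have hc : proj gc ∈ Subgroup.normalizer (conjugatesD : Set GammaTwo) :=
    gammaTwoRelations_proj.c_mem_normalizer
  have hd : proj gd ∈ Subgroup.normalizer (conjugatesD : Set GammaTwo) :=
    Subgroup.le_normalizer proj_gd_mem_conjugatesD
  refine map_mem_of_forall_map_of_mem projSigma (fun x => ?_) w
  cases x with
  | a => exact projSigma_ga ▸ gammaTwoRelations_proj.aca_mem_normalizer
  | b => exact projSigma_gb ▸ hd
  | c => exact projSigma_gc ▸ proj_gc_mul_proj_gd ▸ Subgroup.mul_mem _ hc hd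
  | d => exact projSigma_gd ▸ hc

/-- The preimage of `Q` under `s`; the quotient of `F` by it is dihedral of order dividing `8`. -/
def dihedralKernel : Subgroup F4 := conjugatesD.comap projSigma

instance normal_dihedralKernel : dihedralKernel.Normal where
  conj_mem x hx g := by
    have := (Subgroup.mem_normalizer_iff.1 (projSigma_mem_normalizer_conjugatesD g) _).1 hx
    simpa [dihedralKernel] using this

theorem mem_dihedralKernel_of_projSigma_eq_one {x : F4} (hx : projSigma x = 1) :
    x ∈ dihedralKernel :=
  Subgroup.mem_comap.2 (hx ▸ Subgroup.one_mem _)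

theorem gb_mem_dihedralKernel : gb ∈ dihedralKernel :=
  Subgroup.mem_comap.2 (projSigma_gb ▸ proj_gd_mem_conjugatesD)

theorem commute_projSigma_projSigmaConj {x y : F4} (hx : x ∈ dihedralKernel)
    (hy : y ∈ dihedralKernel) : Commute (projSigma x) (projSigmaConj y) :=
  gammaTwoRelations_proj.commute_conj_dihedralConjugates hx hy

theorem pow_four_mem_dihedralKernel (w : F4) : w ^ 4 ∈ dihedralKernel := by
  have trivial_of_projSigma {x : F4} (hx : projSigma x = 1) :
      QuotientGroup.mk' dihedralKernel x = 1 :=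
    (QuotientGroup.eq_one_iff x).2 (mem_dihedralKernel_of_projSigma_eq_one hx)
  refine (QuotientGroup.eq_one_iff _).1 ?_
  refine map_pow_four_eq_one (QuotientGroup.mk' dihedralKernel) ?_ ?_ ?_ ?_ ?_ w
  · exact trivial_of_projSigma (x := ga * ga) (by simp [mul_assoc])
  · exact (QuotientGroup.eq_one_iff gb).2 gb_mem_dihedralKernel
  · refine QuotientGroup.eq.2 (Subgroup.mem_comap.2 ?_)
    have : (proj gb)⁻¹ * proj gc = (proj gd)⁻¹ := by
      rw [← proj_gc_mul_proj_gd, mul_inv_rev, mul_assoc, inv_mul_cancel, mul_one]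
    simpa [this] using proj_gd_mem_conjugatesD
  · exact trivial_of_projSigma (x := gd * gd) (by simp)
  · refine trivial_of_projSigma (x := (ga * gd) ^ 4) ?_
    simpa using gammaTwoRelations_proj.acac_pow_four

end Quotient

section Decomposable

@[simp] theorem iota_eb : iota (.of .eb) = gb := by simp [iota]
@[simp] theorem iota_ec : iota (.of .ec) = gc := by simp [iota]
@[simp] theorem iota_ed : iota (.of .ed) = gd := by simp [iota]
@[simp] theorem iota_eaba : iota (.of .eaba) = ga * gb * ga := by simp [iota]
@[simp] theorem iota_eaca : iota (.of .eaca) = ga * gc * ga := by simp [iota]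
@[simp] theorem iota_eada : iota (.of .eada) = ga * gd * ga := by simp [iota]
@[simp] theorem iota_eaa : iota (.of .eaa) = ga ^ 2 := by simp [iota]

@[simp] theorem psi_eb : psi (.of .eb) = (ga, gc) := by simp [psi]
@[simp] theorem psi_ec : psi (.of .ec) = (ga, gd) := by simp [psi]
@[simp] theorem psi_ed : psi (.of .ed) = (1, gb) := by simp [psi]
@[simp] theorem psi_eaba : psi (.of .eaba) = (gc, ga) := by simp [psi]
@[simp] theorem psi_eaca : psi (.of .eaca) = (gd, ga) := by simp [psi]
@[simp] theorem psi_eada : psi (.of .eada) = (gb, 1) := by simp [psi]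
@[simp] theorem psi_eaa : psi (.of .eaa) = (1, 1) := by simp [psi]

/-- The subgroup of the `U ∈ H(0)` with `π(U) = t(U₀) s(U₁)` and `s(U₀), s(U₁) ∈ Q`, where
`ψ₀(U) = (U₀, U₁)`. The membership in `Q` makes the equation multiplicative. -/
def decomposable : Subgroup (FreeGroup E7) where
  carrier := {e | (psi e).1 ∈ dihedralKernel ∧ (psi e).2 ∈ dihedralKernel ∧
    proj (iota e) = projSigmaConj (psi e).1 * projSigma (psi e).2}
  one_mem' := by simp
  mul_mem' := by
    rintro e f ⟨he₀, he₁, he⟩ ⟨hf₀, hf₁, hf⟩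
    refine ⟨by simpa using mul_mem he₀ hf₀, by simpa using mul_mem he₁ hf₁, ?_⟩
    simp only [map_mul, he, hf, Prod.fst_mul, Prod.snd_mul]
    exact (commute_projSigma_projSigmaConj he₁ hf₀).mul_mul_mul_comm _ _
  inv_mem' := by
    rintro e ⟨he₀, he₁, he⟩
    refine ⟨by simpa using he₀, by simpa using he₁, ?_⟩
    simp only [map_inv, he, Prod.fst_inv, Prod.snd_inv]
    rw [← mul_inv_rev, (commute_projSigma_projSigmaConj he₁ he₀).eq]

theorem mem_decomposable {e : FreeGroup E7} :
    e ∈ decomposable ↔ (psi e).1 ∈ dihedralKernel ∧ (psi e).2 ∈ dihedralKernel ∧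
      proj (iota e) = projSigmaConj (psi e).1 * projSigma (psi e).2 :=
  Iff.rfl

theorem mem_decomposable_of_eq_one {e : FreeGroup E7} (h₀ : projSigma (psi e).1 = 1)
    (h₁ : projSigma (psi e).2 = 1) (h : proj (iota e) = 1) : e ∈ decomposable :=
  mem_decomposable.2 ⟨mem_dihedralKernel_of_projSigma_eq_one h₀,
    mem_dihedralKernel_of_projSigma_eq_one h₁, by simp [projSigmaConj_apply, h₀, h₁, h]⟩

/-- Conjugation by `h` acts on the second factor of `t(U₀) s(U₁)` as prescribed by `ψ₀`, and also on
the first one, since `s(k)` centralizes it. -/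
theorem conj_mem_decomposable {h e : FreeGroup E7} {k : F4} (hk : k ∈ dihedralKernel)
    (h₀ : proj (iota h) = projSigmaConj (psi h).1 * projSigma k)
    (h₁ : proj (iota h) = projSigma (psi h).2) (he : e ∈ decomposable) :
    h * e * h⁻¹ ∈ decomposable := by
  obtain ⟨he₀, he₁, he⟩ := mem_decomposable.1 he
  refine mem_decomposable.2 ⟨?_, ?_, ?_⟩
  · simpa using normal_dihedralKernel.conj_mem _ he₀ (psi h).1
  · simpa using normal_dihedralKernel.conj_mem _ he₁ (psi h).2
  have hcomm := (commute_projSigma_projSigmaConj hk he₀).mul_inv_cancel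
  calc
    proj (iota (h * e * h⁻¹))
      = proj (iota h) * projSigmaConj (psi e).1 * (proj (iota h))⁻¹ *
          (proj (iota h) * projSigma (psi e).2 * (proj (iota h))⁻¹) := by
        simp [he, mul_assoc]
    _ = projSigmaConj (psi h).1 *
          (projSigma k * projSigmaConj (psi e).1 * (projSigma k)⁻¹) * (projSigmaConj (psi h).1)⁻¹ *
          (projSigma (psi h).2 * projSigma (psi e).2 * (projSigma (psi h).2)⁻¹) := by
        rw [← h₁, h₀]
        simp [mul_assoc]
    _ = projSigmaConj (psi (h * e * h⁻¹)).1 * projSigma (psi (h * e * h⁻¹)).2 := by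
        rw [hcomm]
        simp

theorem conj_eb_mem_decomposable {e : FreeGroup E7} (he : e ∈ decomposable) :
    .of .eb * e * (.of .eb)⁻¹ ∈ decomposable :=
  conj_mem_decomposable gb_mem_dihedralKernel
    (by simp [projSigmaConj_ga, proj_gc_mul_proj_gd]) (by simp) he

theorem conj_ec_mem_decomposable {e : FreeGroup E7} (he : e ∈ decomposable) :
    .of .ec * e * (.of .ec)⁻¹ ∈ decomposable :=
  conj_mem_decomposable (one_mem _) (by simp [projSigmaConj_ga]) (by simp) he

theorem conj_ed_mem_decomposable {e : FreeGroup E7} (he : e ∈ decomposable) :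
    .of .ed * e * (.of .ed)⁻¹ ∈ decomposable :=
  conj_mem_decomposable gb_mem_dihedralKernel (by simp) (by simp) he

/-- Conjugation by `a` on `H(0)`, written on the seven free generators. -/
def conjA : FreeGroup E7 →* FreeGroup E7 :=
  FreeGroup.lift fun x => match x with
    | .eb => .of .eaba * (.of .eaa)⁻¹
    | .ec => .of .eaca * (.of .eaa)⁻¹
    | .ed => .of .eada * (.of .eaa)⁻¹
    | .eaba => .of .eaa * .of .eb
    | .eaca => .of .eaa * .of .ec
    | .eada => .of .eaa * .of .ed
    | .eaa => .of .eaa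

theorem iota_conjA (e : FreeGroup E7) : iota (conjA e) = ga * iota e * ga⁻¹ := by
  have hcomp : iota.comp conjA = (MulAut.conj ga : F4 →* F4).comp iota := by
    refine FreeGroup.ext_hom _ _ fun x => ?_
    cases x <;> simp [conjA, mul_assoc, pow_two]
  exact DFunLike.congr_fun hcomp e

theorem psi_conjA (e : FreeGroup E7) : psi (conjA e) = (psi e).swap := by
  have hcomp : psi.comp conjA = (MulEquiv.prodComm : F4 × F4 ≃* F4 × F4).toMonoidHom.comp psi := by
    refine FreeGroup.ext_hom _ _ fun x => ?_
    cases x <;> simp [conjA]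
  exact DFunLike.congr_fun hcomp e

theorem conjA_mem_decomposable {e : FreeGroup E7} (he : e ∈ decomposable) :
    conjA e ∈ decomposable := by
  obtain ⟨he₀, he₁, he⟩ := mem_decomposable.1 he
  refine mem_decomposable.2 ⟨by simpa [psi_conjA] using he₁, by simpa [psi_conjA] using he₀, ?_⟩
  calc
    proj (iota (conjA e)) =
        proj ga * (projSigmaConj (psi e).1 * projSigma (psi e).2) * proj ga := by
      simp [iota_conjA, he]
    _ = projSigma (psi e).1 * projSigmaConj (psi e).2 := by
      simp [projSigmaConj_apply, mul_assoc]
    _ = projSigmaConj (psi (conjA e)).1 * projSigma (psi (conjA e)).2 := by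
      rw [psi_conjA, Prod.fst_swap, Prod.snd_swap, (commute_projSigma_projSigmaConj he₀ he₁).eq]

end Decomposable

section Relators

theorem ga_mul_self_mem_map_decomposable : ga * ga ∈ decomposable.map iota := by
  refine ⟨.of .eaa, mem_decomposable_of_eq_one ?_ ?_ ?_, ?_⟩ <;> simp [pow_two]

theorem gb_mul_self_mem_map_decomposable : gb * gb ∈ decomposable.map iota := by
  refine ⟨.of .eb * .of .eb, mem_decomposable_of_eq_one ?_ ?_ ?_, ?_⟩ <;> simp [mul_assoc]

theorem gc_mul_self_mem_map_decomposable : gc * gc ∈ decomposable.map iota := by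
  refine ⟨.of .ec * .of .ec, mem_decomposable_of_eq_one ?_ ?_ ?_, ?_⟩ <;> simp [mul_assoc]

theorem gd_mul_self_mem_map_decomposable : gd * gd ∈ decomposable.map iota := by
  refine ⟨.of .ed * .of .ed, mem_decomposable_of_eq_one ?_ ?_ ?_, ?_⟩ <;> simp

theorem gb_mul_gc_mul_gd_mem_map_decomposable : gb * gc * gd ∈ decomposable.map iota := by
  refine ⟨.of .eb * .of .ec * .of .ed, mem_decomposable_of_eq_one ?_ ?_ ?_, ?_⟩ <;>
    simp [mul_assoc, proj_gc_mul_proj_gd]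

theorem ga_mul_gd_pow_four_mem_map_decomposable : (ga * gd) ^ 4 ∈ decomposable.map iota := by
  have hiota : iota ((.of .eada * .of .ed) ^ 2) = (ga * gd) ^ 4 := by simp [pow_succ, mul_assoc]
  refine ⟨_, mem_decomposable_of_eq_one ?_ ?_ ?_, hiota⟩
  · simp [pow_two]
  · simp [pow_two]
  · simpa [hiota] using gammaTwoRelations_proj.a_mul_d_pow_four

theorem adacac_pow_four_mem_map_decomposable :
    (ga * gd * ga * gc * ga * gc) ^ 4 ∈ decomposable.map iota := by
  have hiota : iota ((.of .eada * .of .ec * .of .eaca * .of .ed * .of .eaca * .of .ec) ^ 2) =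
      (ga * gd * ga * gc * ga * gc) ^ 4 := by
    simp [pow_succ, mul_assoc]
  refine ⟨_, mem_decomposable_of_eq_one ?_ ?_ ?_, hiota⟩
  · simp [pow_two, mul_assoc]
  · simp [pow_two, mul_assoc]
  · simpa [hiota] using gammaTwoRelations_proj.adacac_pow_four

/-- The endomorphism `σ` as a map into `H(0)`, written on the seven free generators. -/
def sigmaLift : F4 →* FreeGroup E7 :=
  FreeGroup.lift fun x => match x with
    | .a => .of .eaca
    | .b => .of .ed
    | .c => .of .eb
    | .d => .of .ec

theorem sigmaLift_ga : sigmaLift ga = .of .eaca := by simp [sigmaLift, ga]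
theorem sigmaLift_gb : sigmaLift gb = .of .ed := by simp [sigmaLift, gb]
theorem sigmaLift_gc : sigmaLift gc = .of .eb := by simp [sigmaLift, gc]
theorem sigmaLift_gd : sigmaLift gd = .of .ec := by simp [sigmaLift, gd]

theorem iota_sigmaLift (w : F4) : iota (sigmaLift w) = sigma w := by
  have hcomp : iota.comp sigmaLift = sigma := by
    refine FreeGroup.ext_hom _ _ fun x => ?_
    cases x <;> simp [sigmaLift, sigma]
  exact DFunLike.congr_fun hcomp w

theorem snd_psi_sigmaLift (w : F4) : (psi (sigmaLift w)).2 = w := by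
  have hcomp : ((MonoidHom.snd F4 F4).comp psi).comp sigmaLift = MonoidHom.id F4 := by
    refine FreeGroup.ext_hom _ _ fun x => ?_
    cases x <;> simp [sigmaLift, ga, gb, gc, gd]
  exact DFunLike.congr_fun hcomp w

theorem projSigma_fst_psi_sigmaLift_pow_four (w : F4) :
    projSigma (psi (sigmaLift (w ^ 4))).1 = 1 := by
  have hcaca : (proj gc * (proj ga * proj gc * proj ga)) ^ 4 = 1 := by
    have hrel := gammaTwoRelations_proj.acac_pow_four
    calc
      _ = proj gc * (proj ga * proj gc * proj ga * proj gc) ^ 4 * (proj gc)⁻¹ := by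
        simp [pow_succ, mul_assoc]
      _ = 1 := by rw [hrel, mul_one, mul_inv_cancel]
  have hpow := map_pow_four_eq_one
    (projSigma.comp (((MonoidHom.fst F4 F4).comp psi).comp sigmaLift))
    (by simp [sigmaLift_ga]) (by simp [sigmaLift_gb]) (by simp [sigmaLift_gc, sigmaLift_gd])
    (by simp [sigmaLift_gd, mul_assoc]) (by simpa [sigmaLift_ga, sigmaLift_gd] using hcaca) w
  simpa using hpow

theorem sigma_pow_four_mem_map_decomposable (w : F4) : sigma (w ^ 4) ∈ decomposable.map iota := by
  refine ⟨sigmaLift (w ^ 4), mem_decomposable.2 ⟨?_, ?_, ?_⟩, iota_sigmaLift _⟩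
  · exact mem_dihedralKernel_of_projSigma_eq_one (projSigma_fst_psi_sigmaLift_pow_four w)
  · exact (snd_psi_sigmaLift (w ^ 4)).symm ▸ pow_four_mem_dihedralKernel w
  · rw [projSigmaConj_apply, projSigma_fst_psi_sigmaLift_pow_four, snd_psi_sigmaLift,
      iota_sigmaLift]
    simp [projSigma]

theorem iterate_sigma_pow_four_mem_map_decomposable {w : F4} (hw : w ^ 4 ∈ decomposable.map iota) :
    ∀ i : ℕ, sigma^[i] (w ^ 4) ∈ decomposable.map iota
  | 0 => hw
  | i + 1 => by
    rw [Function.iterate_succ_apply', iterate_map_pow]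
    exact sigma_pow_four_mem_map_decomposable _

instance normal_map_decomposable : (decomposable.map iota).Normal := by
  refine Subgroup.normalizer_eq_top_iff.1 (eq_top_iff.2 fun w _ => ?_)
  refine map_mem_of_forall_map_of_mem (MonoidHom.id F4) (fun x => ?_) w
  cases x <;> refine mem_normalizer_of_mul_self_mem_normalizer (Subgroup.le_normalizer ?_) ?_
  · exact ga_mul_self_mem_map_decomposable
  · rintro _ ⟨e, he, rfl⟩
    exact ⟨_, conjA_mem_decomposable he, iota_conjA e⟩
  · exact gb_mul_self_mem_map_decomposable
  · rintro _ ⟨e, he, rfl⟩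
    exact ⟨_, conj_eb_mem_decomposable he, by simp [gb]⟩
  · exact gc_mul_self_mem_map_decomposable
  · rintro _ ⟨e, he, rfl⟩
    exact ⟨_, conj_ec_mem_decomposable he, by simp [gc]⟩
  · exact gd_mul_self_mem_map_decomposable
  · rintro _ ⟨e, he, rfl⟩
    exact ⟨_, conj_ed_mem_decomposable he, by simp [gd]⟩

theorem normalClosure_Rinf_le_map_decomposable :
    Subgroup.normalClosure Rinf ≤ decomposable.map iota := by
  refine Subgroup.normalClosure_le_normal ?_
  rintro _ (((rfl | rfl | rfl | rfl | rfl) | ⟨i, rfl⟩) | ⟨i, rfl⟩)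
  · exact pow_two ga ▸ ga_mul_self_mem_map_decomposable
  · exact pow_two gb ▸ gb_mul_self_mem_map_decomposable
  · exact pow_two gc ▸ gc_mul_self_mem_map_decomposable
  · exact pow_two gd ▸ gd_mul_self_mem_map_decomposable
  · exact gb_mul_gc_mul_gd_mem_map_decomposable
  · exact iterate_sigma_pow_four_mem_map_decomposable ga_mul_gd_pow_four_mem_map_decomposable i
  · exact iterate_sigma_pow_four_mem_map_decomposable adacac_pow_four_mem_map_decomposable i

end Relators

section Injectivity

/-- The action of `a` on `F = H(0) ⊔ a⁻¹H(0)` by left multiplication, each coset being identified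
with the free group on the seven generators. -/
def permA : Equiv.Perm (FreeGroup E7 ⊕ FreeGroup E7) where
  toFun := Sum.elim (fun m => .inr (.of .eaa * m)) .inl
  invFun := Sum.elim .inr (fun m => .inl ((.of .eaa)⁻¹ * m))
  left_inv := by rintro (m | m) <;> simp
  right_inv := by rintro (m | m) <;> simp

/-- The action of `H(0)` on `F = H(0) ⊔ a⁻¹H(0)` by left multiplication. -/
def permH : FreeGroup E7 →* Equiv.Perm (FreeGroup E7 ⊕ FreeGroup E7) :=
  (Equiv.Perm.sumCongrHom _ _).comp
    ((MulAction.toPermHom _ _).prod ((MulAction.toPermHom _ _).comp conjA))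

/-- The action of `F` on `H(0) ⊔ a⁻¹H(0)` by left multiplication. -/
def permF : F4 →* Equiv.Perm (FreeGroup E7 ⊕ FreeGroup E7) :=
  FreeGroup.lift fun x => match x with
    | .a => permA
    | .b => permH (.of .eb)
    | .c => permH (.of .ec)
    | .d => permH (.of .ed)

theorem permF_iota (e : FreeGroup E7) : permF (iota e) = permH e := by
  have hcomp : permF.comp iota = permH := by
    refine FreeGroup.ext_hom _ _ fun x => Equiv.ext fun m => ?_
    cases x <;> rcases m with m | m <;>
      simp [permF, permA, permH, conjA, ga, gb, gc, gd, pow_two, mul_assoc]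
  exact DFunLike.congr_fun hcomp e

theorem permH_injective : Function.Injective permH :=
  Equiv.Perm.sumCongrHom_injective.comp fun _ _ h =>
    MulAction.toPerm_injective (congrArg Prod.fst h)

theorem iota_injective : Function.Injective iota := fun e f h =>
  permH_injective (by rw [← permF_iota, ← permF_iota, h])

end Injectivity

/-- `N(∞) ⊆ H(0)` and, if `U ∈ N(∞)` and `ψ₀(U) = (U₀, U₁)`,
then `U = a σ(U₀) a σ(U₁) V` for some `V ∈ N(2)`. -/
theorem decomposition_mod_N2 :
    (Subgroup.normalClosure Rinf : Set F4) ⊆ (iota.range : Set F4) ∧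
    ∀ e : FreeGroup E7, iota e ∈ Subgroup.normalClosure Rinf →
      (ga * sigma (psi e).1 * ga * sigma (psi e).2)⁻¹ * iota e ∈
        Subgroup.normalClosure (Rpres 2) := by
  refine ⟨?_, fun e he => ?_⟩
  · intro u hu
    obtain ⟨e, -, rfl⟩ := normalClosure_Rinf_le_map_decomposable hu
    exact ⟨e, rfl⟩
  · obtain ⟨f, hf, hfe⟩ := normalClosure_Rinf_le_map_decomposable he
    obtain rfl := iota_injective hfe
    obtain ⟨-, -, heq⟩ := mem_decomposable.1 hf
    refine QuotientGroup.eq.1 (Eq.symm (heq.trans ?_))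
    rw [projSigmaConj_apply, inv_proj_ga]
    rfl
end

section
/- Let A₀ be a finite alphabet, R₀ a finite set of nonempty cyclically reduced words of the free group F(A₀), t a letter not in A₀, A = A₀ ∪ {t}, and π_t : F(A) → F(A₀) the homomorphism fixing each letter of A₀ and sending t to 1. Let N_t be the set of all nonempty cyclically reduced elements of the kernel of π_t, and let V_t be the set of all words X₁ t R₁ t X₁⁻¹ t X₂ t R₂ t X₂⁻¹ t ⋯ X_k t R_k t X_k⁻¹ t with k ≥ 1, R_i ∈ R₀ ∪ R₀⁻¹, and X_i reduced words of F(A₀). Then every element W of the normal closure of R = N_t ∪ V_t in F(A) can be written as a product of at most 2 conjugates of elements of R ∪ R⁻¹. In particular, the Dehn 2-function of the presentation ⟨A ∥ N_t ∪ V_t⟩ is bounded by the constant 2. -/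
/-- An element of a free group is cyclically reduced if its reduced word is
cyclically reduced: whenever the reduced word starts with the letter `x` and
ends with the letter `y` with `x.1 = y.1`, then `x.2 = y.2` (the first letter
is not the inverse of the last one). -/
def IsCyclicallyReduced {β : Type} [DecidableEq β] (w : FreeGroup β) : Prop :=
  ∀ (x y : β × Bool) (l : List (β × Bool)),
    w.toWord = x :: (l ++ [y]) → x.1 = y.1 → x.2 = y.2

section

variable {α : Type} [DecidableEq α]

/-- The new letter `t` adjoined to the alphabet `A₀` (`t = none`). -/
def tt : FreeGroup (Option α) := FreeGroup.of none

/-- The retraction `π_t : F(A) → F(A₀)` fixing each letter of `A₀` and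
sending `t` to `1`. -/
def pit : FreeGroup (Option α) →* FreeGroup α :=
  FreeGroup.lift fun x => x.elim 1 FreeGroup.of

/-- The inclusion `F(A₀) → F(A)`. -/
def iot : FreeGroup α →* FreeGroup (Option α) :=
  FreeGroup.map some

/-- `N_t`: the set of all nonempty cyclically reduced elements of the kernel
of `π_t` (equivalently, of the normal closure of `t` in `F(A)`). -/
def Nt : Set (FreeGroup (Option α)) :=
  {w | w ≠ 1 ∧ IsCyclicallyReduced w ∧ w ∈ pit.ker}

/-- `V_t`: the set of all words
`X₁ t R₁ t X₁⁻¹ t X₂ t R₂ t X₂⁻¹ t ⋯ X_k t R_k t X_k⁻¹ t` with `k ≥ 1`,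
`R_i ∈ R₀ ∪ R₀⁻¹` and `X_i ∈ F(A₀)`. -/
def Vt (R₀ : Set (FreeGroup α)) : Set (FreeGroup (Option α)) :=
  {w | ∃ k : ℕ, 0 < k ∧ ∃ R X : Fin k → FreeGroup α,
    (∀ i, R i ∈ R₀ ∪ R₀⁻¹) ∧
    w = (List.ofFn fun i =>
          iot (X i) * tt * iot (R i) * tt * (iot (X i))⁻¹ * tt).prod}

end

/-- `W` is a product of `L` conjugates of elements of `R ∪ R⁻¹`. -/
def IsProdConjPM {G : Type*} [Group G] (R : Set G) (L : ℕ) (W : G) : Prop :=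
  ∃ f : Fin L → G,
    (∀ j, ∃ x r, r ∈ R ∧ (f j = x * r * x⁻¹ ∨ f j = x * r⁻¹ * x⁻¹)) ∧
    W = (List.ofFn f).prod

/-!
A word of `V_t` is sent by `π_t` to `∏ X_i R_i X_i⁻¹`, so every nontrivial element of `⟨⟨R₀⟩⟩` is
the image of a single relator of `V_t`, however many conjugates it needs over `R₀`. Conversely
`π_t` maps `⟨⟨N_t ∪ V_t⟩⟩` into `⟨⟨R₀⟩⟩`. Hence any `W ∈ ⟨⟨N_t ∪ V_t⟩⟩` agrees with some
`V ∈ V_t ∪ {1}` modulo `ker π_t`, and the error `V⁻¹ W ∈ ker π_t` is, unless trivial, conjugate to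
its cyclic reduction, a relator of `N_t`.
-/

theorem isCyclicallyReduced_iff_toWord {β : Type} [DecidableEq β] {w : FreeGroup β} :
    IsCyclicallyReduced w ↔ FreeGroup.IsCyclicallyReduced w.toWord := by
  rw [FreeGroup.isCyclicallyReduced_iff, and_iff_right FreeGroup.isReduced_toWord,
    IsCyclicallyReduced]
  induction w.toWord using List.bidirectionalRec with
  | nil => simp
  | singleton a => simp
  | cons_append a l b => grind

theorem exists_isCyclicallyReduced_isConj {β : Type} [DecidableEq β] (w : FreeGroup β) :
    ∃ r, IsCyclicallyReduced r ∧ IsConj r w := by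
  let core := FreeGroup.reduceCyclically w.toWord
  let c := FreeGroup.reduceCyclically.conjugator w.toWord
  have core_reduced : FreeGroup.IsCyclicallyReduced core :=
    FreeGroup.reduceCyclically.isCyclicallyReduced FreeGroup.isReduced_toWord
  refine ⟨.mk core, ?_, isConj_iff.2 ⟨.mk c, ?_⟩⟩
  · rwa [isCyclicallyReduced_iff_toWord, FreeGroup.toWord_mk, core_reduced.isReduced.reduce_eq]
  · rw [FreeGroup.inv_mk, FreeGroup.mul_mk, FreeGroup.mul_mk,
      FreeGroup.reduceCyclically.conj_conjugator_reduceCyclically, FreeGroup.mk_toWord]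

namespace IsProdConjPM

variable {G : Type*} [Group G] {R S : Set G} {m n : ℕ} {r v w : G}

theorem iff_exists_conj : IsProdConjPM R n w ↔ ∃ r x : Fin n → G, (∀ i, r i ∈ R ∪ R⁻¹) ∧
    w = (List.ofFn fun i => x i * r i * (x i)⁻¹).prod := by
  constructor
  · rintro ⟨f, hf, rfl⟩
    have signed (i : Fin n) : ∃ r x, r ∈ R ∪ R⁻¹ ∧ f i = x * r * x⁻¹ := by
      obtain ⟨x, r, hr, h | h⟩ := hf i
      · exact ⟨r, x, .inl hr, h⟩
      · exact ⟨r⁻¹, x, .inr (Set.inv_mem_inv.2 hr), h⟩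
    choose r x hr hf using signed
    exact ⟨r, x, hr, by simp only [← hf]⟩
  · rintro ⟨r, x, hr, rfl⟩
    refine ⟨_, fun i => ?_, rfl⟩
    rcases hr i with h | h
    · exact ⟨x i, r i, h, .inl rfl⟩
    · exact ⟨x i, (r i)⁻¹, h, .inr (by rw [inv_inv])⟩

theorem mono (hRS : R ⊆ S) (hw : IsProdConjPM R n w) : IsProdConjPM S n w :=
  let ⟨f, hf, hprod⟩ := hw
  ⟨f, fun j => let ⟨x, r, hr, h⟩ := hf j; ⟨x, r, hRS hr, h⟩, hprod⟩

theorem one : IsProdConjPM R 0 1 :=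
  ⟨Fin.elim0, fun j => j.elim0, by simp⟩

theorem of_isConj (hr : r ∈ R ∪ R⁻¹) (hrw : IsConj r w) : IsProdConjPM R 1 w := by
  obtain ⟨x, rfl⟩ := isConj_iff.1 hrw
  exact iff_exists_conj.2 ⟨fun _ => r, fun _ => x, fun _ => hr, by simp⟩

theorem mul (hv : IsProdConjPM R m v) (hw : IsProdConjPM R n w) :
    IsProdConjPM R (m + n) (v * w) := by
  obtain ⟨f, hf, rfl⟩ := hv
  obtain ⟨g, hg, rfl⟩ := hw
  refine ⟨Fin.append f g, fun j => ?_, by rw [List.ofFn_fin_append, List.prod_append]⟩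
  induction j using Fin.addCases with
  | left i => simpa only [Fin.append_left] using hf i
  | right i => simpa only [Fin.append_right] using hg i

theorem mem_normalClosure (hw : IsProdConjPM R n w) : w ∈ Subgroup.normalClosure R := by
  obtain ⟨f, hf, rfl⟩ := hw
  refine Subgroup.list_prod_mem _ (List.forall_mem_ofFn_iff.2 fun j => ?_)
  obtain ⟨x, r, hr, h | h⟩ := hf j <;> rw [h]
  · exact Subgroup.normalClosure_normal.conj_mem _ (Subgroup.subset_normalClosure hr) x
  · exact Subgroup.normalClosure_normal.conj_mem _
      (inv_mem (Subgroup.subset_normalClosure hr)) x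

theorem exists_of_mem_normalClosure (hw : w ∈ Subgroup.normalClosure R) :
    ∃ n, IsProdConjPM R n w := by
  induction hw using Subgroup.closure_induction_left with
  | one => exact ⟨0, one⟩
  | mul_left x hx y _ ih =>
    obtain ⟨r, hr, hrx⟩ := Group.mem_conjugatesOfSet_iff.1 hx
    obtain ⟨n, hy⟩ := ih
    exact ⟨1 + n, (of_isConj (.inl hr) hrx).mul hy⟩
  | inv_mul_cancel x hx y _ ih =>
    obtain ⟨r, hr, hrx⟩ := Group.mem_conjugatesOfSet_iff.1 hx
    obtain ⟨c, rfl⟩ := isConj_iff.1 hrx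
    obtain ⟨n, hy⟩ := ih
    have inv_conj : IsConj r⁻¹ (c * r * c⁻¹)⁻¹ := isConj_iff.2 ⟨c, conj_inv.symm⟩
    exact ⟨1 + n, (of_isConj (.inr (Set.inv_mem_inv.2 hr)) inv_conj).mul hy⟩

end IsProdConjPM

section

variable {α : Type}

theorem pit_iot (g : FreeGroup α) : pit (iot g) = g := by
  have pit_comp_iot : (pit.comp iot : FreeGroup α →* FreeGroup α) = MonoidHom.id _ := by
    ext a
    simp [pit, iot]
  exact DFunLike.congr_fun pit_comp_iot g

theorem pit_tt : pit (tt : FreeGroup (Option α)) = 1 := by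
  simp [pit, tt]

theorem pit_prod_ofFn {k : ℕ} (R X : Fin k → FreeGroup α) :
    pit (List.ofFn fun i => iot (X i) * tt * iot (R i) * tt * (iot (X i))⁻¹ * tt).prod =
      (List.ofFn fun i => X i * R i * (X i)⁻¹).prod := by
  simp [map_list_prod, List.map_ofFn, Function.comp_def, pit_iot, pit_tt]

theorem pit_image_Vt (R₀ : Set (FreeGroup α)) :
    pit '' Vt R₀ = {g | ∃ k, 0 < k ∧ IsProdConjPM R₀ k g} := by
  ext g
  constructor
  · rintro ⟨_, ⟨k, hk, R, X, hR, rfl⟩, rfl⟩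
    exact ⟨k, hk, IsProdConjPM.iff_exists_conj.2 ⟨R, X, hR, pit_prod_ofFn R X⟩⟩
  · rintro ⟨k, hk, hg⟩
    obtain ⟨R, X, hR, rfl⟩ := IsProdConjPM.iff_exists_conj.1 hg
    exact ⟨_, ⟨k, hk, R, X, hR, rfl⟩, pit_prod_ofFn R X⟩

theorem exists_isProdConjPM_Vt_of_mem_normalClosure {R₀ : Set (FreeGroup α)} {g : FreeGroup α}
    (hg : g ∈ Subgroup.normalClosure R₀) :
    ∃ V, pit V = g ∧ ∃ L ≤ 1, IsProdConjPM (Vt R₀) L V := by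
  obtain ⟨k, hk⟩ := IsProdConjPM.exists_of_mem_normalClosure hg
  obtain rfl | k_pos := k.eq_zero_or_pos
  · obtain ⟨_, _, rfl⟩ := hk
    exact ⟨1, by simp, 0, zero_le_one, .one⟩
  · obtain ⟨V, hV, rfl⟩ : g ∈ pit '' Vt R₀ := pit_image_Vt R₀ ▸ ⟨k, k_pos, hk⟩
    exact ⟨V, rfl, 1, le_rfl, .of_isConj (.inl hV) (.refl V)⟩

variable [DecidableEq α]

theorem exists_isProdConjPM_Nt_of_mem_ker {w : FreeGroup (Option α)} (hw : w ∈ pit.ker) :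
    ∃ L ≤ 1, IsProdConjPM Nt L w := by
  obtain rfl | w_ne_one := eq_or_ne w 1
  · exact ⟨0, zero_le_one, .one⟩
  obtain ⟨r, r_reduced, hrw⟩ := exists_isCyclicallyReduced_isConj w
  have r_ne_one : r ≠ 1 := by
    rintro rfl
    exact w_ne_one (isConj_one_right.1 hrw)
  have r_mem_ker : r ∈ pit.ker := by
    obtain ⟨x, rfl⟩ := isConj_iff.1 hrw.symm
    exact pit.normal_ker.conj_mem w hw x
  exact ⟨1, le_rfl, .of_isConj (.inl ⟨r_ne_one, r_reduced, r_mem_ker⟩) hrw⟩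

theorem normalClosure_Nt_union_Vt_le_comap_pit (R₀ : Set (FreeGroup α)) :
    Subgroup.normalClosure (Nt ∪ Vt R₀) ≤ (Subgroup.normalClosure R₀).comap pit := by
  refine Subgroup.normalClosure_le_normal (Set.union_subset ?_ ?_)
  · rintro w ⟨_, _, hw⟩
    exact Subgroup.ker_le_comap _ _ hw
  · intro w hw
    obtain ⟨k, _, hk⟩ := (pit_image_Vt R₀).subset (Set.mem_image_of_mem pit hw)
    exact hk.mem_normalClosure

theorem referee_presentation_dehn_function_general (R₀ : Set (FreeGroup α)) :
    ∀ W ∈ Subgroup.normalClosure (Nt ∪ Vt R₀),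
      ∃ L : ℕ, L ≤ 2 ∧ IsProdConjPM (Nt ∪ Vt R₀) L W := by
  intro W hW
  obtain ⟨V, hVW, m, hm, hV⟩ := exists_isProdConjPM_Vt_of_mem_normalClosure
    (normalClosure_Nt_union_Vt_le_comap_pit R₀ hW)
  have inv_mul_mem_ker : V⁻¹ * W ∈ pit.ker := by
    rw [MonoidHom.mem_ker, map_mul, map_inv, hVW, inv_mul_cancel]
  obtain ⟨n, hn, hVinvW⟩ := exists_isProdConjPM_Nt_of_mem_ker inv_mul_mem_ker
  have hprod := (hV.mono Set.subset_union_right).mul (hVinvW.mono Set.subset_union_left)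
  rw [mul_inv_cancel_left] at hprod
  exact ⟨m + n, add_le_add hm hn, hprod⟩

end

/-- every element of the normal closure of `R = N_t ∪ V_t` is a
product of at most `2` conjugates of elements of `R ∪ R⁻¹`; the Dehn
2-function of `⟨A ∥ N_t ∪ V_t⟩` is bounded by the constant `2`. -/
theorem referee_presentation_dehn_function {α : Type} [DecidableEq α] [Fintype α]
    (R₀ : Set (FreeGroup α)) (hfin : R₀.Finite)
    (hR₀ : ∀ r ∈ R₀, r ≠ 1 ∧ IsCyclicallyReduced r) :
    ∀ W ∈ Subgroup.normalClosure (Nt ∪ Vt R₀),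
      ∃ L : ℕ, L ≤ 2 ∧ IsProdConjPM (Nt ∪ Vt R₀) L W :=
  referee_presentation_dehn_function_general R₀
end
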